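/- The ring of integers of the number field L = ℚ(i, √5) (a degree-4 extension of ℚ, with ring of integers ℤ[i][θ] where θ = (1+√5)/2) is a principal ideal domain: every ideal of O_L is principal. -/

import Mathlib

open NumberField

/-- The number field `L = ℚ(i, √5)`, realized as a subfield of `ℂ`. -/
noncomputable def L5 : IntermediateField ℚ ℂ :=
  IntermediateField.adjoin ℚ ({Complex.I, (Real.sqrt 5 : ℂ)} : Set ℂ)

theorem L5_I_mem : Complex.I ∈ L5 :=
  IntermediateField.subset_adjoin _ _ (by simp)

theorem L5_s_mem : (Real.sqrt 5 : ℂ) ∈ L5 :=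
  IntermediateField.subset_adjoin _ _ (by simp)

theorem L5_sq : (Real.sqrt 5 : ℂ) * (Real.sqrt 5 : ℂ) = 5 := by
  rw [← Complex.ofReal_mul, Real.mul_self_sqrt (by norm_num)]; norm_num

/-- the imaginary unit in `L5` -/
noncomputable def L5i : L5 := ⟨Complex.I, L5_I_mem⟩

/-- the square root of five in `L5` -/
noncomputable def L5s : L5 := ⟨(Real.sqrt 5 : ℂ), L5_s_mem⟩

/-- the golden ratio in `L5` -/
noncomputable def L5t : L5 := (1 + L5s) / 2

theorem L5i_sq : L5i * L5i = -1 := by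
  apply Subtype.ext; simp [L5i]

theorem L5s_sq : L5s * L5s = 5 := by
  apply Subtype.ext
  change (Real.sqrt 5 : ℂ) * (Real.sqrt 5 : ℂ) = 5
  exact L5_sq

theorem L5t_sq : L5t * L5t = L5t + 1 := by
  unfold L5t
  linear_combination (1 / 4 : L5) * L5s_sq

/-- the family `1, i, θ, iθ` -/
noncomputable def L5v : Fin 4 → L5 := ![1, L5i, L5t, L5i * L5t]

theorem L5v_indep : LinearIndependent ℚ L5v := by
  rw [Fintype.linearIndependent_iff]
  intro g hg
  have h5 : Irrational (Real.sqrt 5) := by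
    have := Nat.Prime.irrational_sqrt (p := 5) (by norm_num)
    exact_mod_cast this
  have key : ∀ a c : ℚ, (a : ℝ) + c * ((1 + Real.sqrt 5) / 2) = 0 → a = 0 ∧ c = 0 := by
    intro a c h
    by_cases hc : c = 0
    · subst hc
      simp at h
      exact ⟨by exact_mod_cast h, rfl⟩
    · exfalso
      apply h5
      refine ⟨-(2 * a / c) - 1, ?_⟩
      have hc' : (c : ℝ) ≠ 0 := by exact_mod_cast hc
      push_cast
      field_simp
      linarith
  have hg' := congrArg (Subtype.val : L5 → ℂ) hg
  simp only [Fin.sum_univ_four, L5v] at hg'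
  have h2 : ((g 0 : ℚ) : ℂ) + (g 1 : ℂ) * Complex.I + (g 2 : ℂ) * ((1 + (Real.sqrt 5 : ℂ)) / 2)
      + (g 3 : ℂ) * (Complex.I * ((1 + (Real.sqrt 5 : ℂ)) / 2)) = 0 := by
    have : ((2 : L5) : ℂ) = 2 := rfl
    simpa [L5i, L5t, L5s, Algebra.smul_def, this] using hg'
  have h3 : (((g 0 : ℝ) + (g 2 : ℝ) * ((1 + Real.sqrt 5) / 2) : ℝ) : ℂ) +
      (((g 1 : ℝ) + (g 3 : ℝ) * ((1 + Real.sqrt 5) / 2) : ℝ) : ℂ) * Complex.I = 0 := by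
    push_cast
    linear_combination h2
  have hre := congrArg Complex.re h3
  have him := congrArg Complex.im h3
  simp only [Complex.add_re, Complex.add_im, Complex.re_ofReal_mul, Complex.im_ofReal_mul,
    Complex.ofReal_re, Complex.ofReal_im, Complex.I_re, Complex.I_im, mul_zero, mul_one, add_zero,
    zero_add, Complex.zero_re, Complex.zero_im] at hre him
  have e1 := key _ _ hre
  have e2 := key _ _ him
  intro i
  fin_cases i
  exacts [e1.1, e2.1, e1.2, e2.2]

theorem L5_form (x : ℂ) (hx : x ∈ L5) : ∃ a b c d : ℚ,
    x = a + b * Complex.I + c * (Real.sqrt 5 : ℂ) + d * (Complex.I * (Real.sqrt 5 : ℂ)) := by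
  have halg : ∀ x ∈ ({Complex.I, (Real.sqrt 5 : ℂ)} : Set ℂ), IsAlgebraic ℚ x := by
    rintro x (rfl | rfl)
    · exact (show IsIntegral ℚ Complex.I from
        .of_pow (n := 2) (by norm_num) (by rw [Complex.I_sq]; exact isIntegral_one.neg)).isAlgebraic
    · exact (show IsIntegral ℚ (Real.sqrt 5 : ℂ) from
        .of_pow (n := 2) (by norm_num) (by
          rw [pow_two, L5_sq]; exact isIntegral_algebraMap (R := ℚ) (x := (5 : ℚ)))).isAlgebraic
  have hx' : x ∈ Algebra.adjoin ℚ ({Complex.I, (Real.sqrt 5 : ℂ)} : Set ℂ) := by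
    rw [← IntermediateField.adjoin_toSubalgebra_of_isAlgebraic halg]
    exact hx
  clear hx
  induction hx' using Algebra.adjoin_induction with
  | mem x h =>
    rcases h with rfl | rfl
    · exact ⟨0, 1, 0, 0, by simp⟩
    · exact ⟨0, 0, 1, 0, by simp⟩
  | algebraMap r => exact ⟨r, 0, 0, 0, by simp⟩
  | add x y hx hy ihx ihy =>
    obtain ⟨a, b, c, d, rfl⟩ := ihx
    obtain ⟨a', b', c', d', rfl⟩ := ihy
    refine ⟨a + a', b + b', c + c', d + d', ?_⟩
    push_cast
    ring
  | mul x y hx hy ihx ihy =>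
    obtain ⟨a, b, c, d, rfl⟩ := ihx
    obtain ⟨a', b', c', d', rfl⟩ := ihy
    refine ⟨a * a' - b * b' + 5 * c * c' - 5 * d * d', a * b' + b * a' + 5 * c * d' + 5 * d * c',
      a * c' + c * a' - b * d' - d * b', a * d' + d * a' + b * c' + c * b', ?_⟩
    push_cast
    have h1 := L5_sq
    have h2 : Complex.I ^ 2 = -1 := Complex.I_sq
    generalize (Real.sqrt 5 : ℂ) = s at *
    generalize Complex.I = i at *
    have h1' : s ^ 2 = 5 := by rw [pow_two, h1]
    linear_combination (c * c' + c * d' * i + d * c' * i + d * d' * i ^ 2) * h1' +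
      (b * b' + b * d' * s + d * b' * s + 5 * d * d') * h2

theorem L5v_span : ⊤ ≤ Submodule.span ℚ (Set.range L5v) := by
  rintro ⟨x, hx⟩ -
  obtain ⟨a, b, c, d, h⟩ := L5_form x hx
  have hm : ∀ j, L5v j ∈ Submodule.span ℚ (Set.range L5v) :=
    fun j => Submodule.subset_span ⟨j, rfl⟩
  have : (⟨x, hx⟩ : L5) = (a - c) • L5v 0 + (b - d) • L5v 1 + (2 * c) • L5v 2 + (2 * d) • L5v 3 := by
    apply Subtype.ext
    have : ((2 : L5) : ℂ) = 2 := rfl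
    simp [L5v, L5i, L5t, L5s, Algebra.smul_def, this, h]
    ring
  rw [this]
  exact add_mem (add_mem (add_mem (Submodule.smul_mem _ _ (hm 0)) (Submodule.smul_mem _ _ (hm 1)))
    (Submodule.smul_mem _ _ (hm 2))) (Submodule.smul_mem _ _ (hm 3))

/-- the basis `1, i, θ, iθ` -/
noncomputable def L5b : Module.Basis (Fin 4) ℚ L5 := Module.Basis.mk L5v_indep L5v_span

instance L5_nf : NumberField L5 where
  to_charZero := inferInstance
  to_finiteDimensional := Module.Basis.finiteDimensional_of_finite L5b

theorem L5_finrank : Module.finrank ℚ L5 = 4 := by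
  rw [Module.finrank_eq_card_basis L5b]; rfl

theorem L5_trace_diag (x : L5) (f : Fin 4 → Fin 4 → ℚ)
    (h : ∀ j, x * L5v j = ∑ k, f j k • L5v k) :
    Algebra.trace ℚ L5 x = ∑ j, f j j := by
  rw [Algebra.trace_eq_matrix_trace L5b, Matrix.trace]
  refine Finset.sum_congr rfl fun j _ => ?_
  have hb : ∀ j, L5b j = L5v j := fun j => by simp [L5b]
  rw [Matrix.diag_apply, Algebra.leftMulMatrix_eq_repr_mul, hb, h]
  simp only [← hb]
  rw [Module.Basis.repr_sum_self]

theorem L5_tr (a b c d : ℚ) : Algebra.trace ℚ L5 (a • L5v 0 + b • L5v 1 + c • L5v 2 + d • L5v 3)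
    = 4 * a + 2 * c := by
  have h0 : Algebra.trace ℚ L5 (L5v 0) = 4 := by
    have := Algebra.trace_algebraMap (S := L5) (1 : ℚ)
    rw [L5_finrank] at this
    simpa [L5v] using this
  have h1 : Algebra.trace ℚ L5 (L5v 1) = 0 := by
    rw [L5_trace_diag _ ![![0, 1, 0, 0], ![-1, 0, 0, 0], ![0, 0, 0, 1], ![0, 0, -1, 0]]]
    · simp [Fin.sum_univ_four]
    · intro j
      fin_cases j <;> simp [Fin.sum_univ_four, L5v, L5i_sq, ← mul_assoc]
  have h2 : Algebra.trace ℚ L5 (L5v 2) = 2 := by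
    rw [L5_trace_diag _ ![![0, 0, 1, 0], ![0, 0, 0, 1], ![1, 0, 1, 0], ![0, 1, 0, 1]]]
    · simp [Fin.sum_univ_four]; norm_num
    · intro j
      fin_cases j <;> simp [Fin.sum_univ_four, L5v]
      · ring
      · linear_combination L5t_sq
      · linear_combination L5i * L5t_sq
  have h3 : Algebra.trace ℚ L5 (L5v 3) = 0 := by
    rw [L5_trace_diag _ ![![0, 0, 0, 1], ![0, 0, -1, 0], ![0, 1, 0, 1], ![-1, 0, -1, 0]]]
    · simp [Fin.sum_univ_four]
    · intro j
      fin_cases j <;> simp [Fin.sum_univ_four, L5v]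
      · linear_combination L5t * L5i_sq
      · linear_combination L5i * L5t_sq
      · linear_combination L5t * L5t * L5i_sq - L5t_sq
  rw [map_add, map_add, map_add, map_smul, map_smul, map_smul, map_smul, h0, h1, h2, h3]
  simp only [smul_eq_mul]
  ring

/-- `i` as an algebraic integer -/
noncomputable def L5iO : 𝓞 L5 := ⟨L5i, .of_pow (n := 2) (by norm_num) (by
  rw [pow_two, L5i_sq]; exact isIntegral_one.neg)⟩

/-- `θ` as an algebraic integer -/
noncomputable def L5tO : 𝓞 L5 := ⟨L5t, ⟨Polynomial.X ^ 2 - Polynomial.X - 1, by monicity!, by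
  simp only [Polynomial.eval₂_sub, Polynomial.eval₂_X_pow, Polynomial.eval₂_X, Polynomial.eval₂_one]
  linear_combination L5t_sq⟩⟩

theorem L5iO_sq : L5iO * L5iO = -1 := RingOfIntegers.ext L5i_sq
theorem L5tO_sq : L5tO * L5tO = L5tO + 1 := RingOfIntegers.ext L5t_sq

theorem L5_trO (x : 𝓞 L5) (a b c d : ℤ) (h : x = a + b * L5iO + c * L5tO + d * (L5iO * L5tO)) :
    Algebra.trace ℤ (𝓞 L5) x = 4 * a + 2 * c := by
  have h1 := Algebra.coe_trace_int (K := L5) x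
  have h2 := L5_tr a b c d
  have h3 : (x : L5) = (a : ℚ) • L5v 0 + (b : ℚ) • L5v 1 + (c : ℚ) • L5v 2 + (d : ℚ) • L5v 3 := by
    have hi : algebraMap (𝓞 L5) L5 L5iO = L5i := rfl
    have ht : algebraMap (𝓞 L5) L5 L5tO = L5t := rfl
    rw [h]
    simp [L5v, Algebra.smul_def, hi, ht]
  rw [h3, h2] at h1
  exact_mod_cast h1

/-- the family `1, i, θ, iθ` of integers -/
noncomputable def L5vO : Fin 4 → 𝓞 L5 := ![1, L5iO, L5tO, L5iO * L5tO]

theorem L5_discr_vO : Algebra.discr ℤ L5vO = 400 := by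
  have hM : Algebra.traceMatrix ℤ L5vO =
      !![4, 0, 2, 0; 0, -4, 0, -2; 2, 0, 6, 0; 0, -2, 0, -6] := by
    have hi := L5iO_sq
    have ht := L5tO_sq
    have aux : ∀ x y : 𝓞 L5, ∀ a b c d r : ℤ, r = 4 * a + 2 * c →
        x * y = a + b * L5iO + c * L5tO + d * (L5iO * L5tO) →
        Algebra.trace ℤ (𝓞 L5) (x * y) = r := by
      intro x y a b c d r hr h
      rw [hr]
      exact L5_trO _ a b c d h
    ext j k
    rw [Algebra.traceMatrix_apply, Algebra.traceForm_apply]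
    fin_cases j <;> fin_cases k
    · exact aux _ _ 1 0 0 0 _ (by norm_num) (by simp [L5vO])
    · exact aux _ _ 0 1 0 0 _ (by norm_num) (by simp [L5vO])
    · exact aux _ _ 0 0 1 0 _ (by norm_num) (by simp [L5vO])
    · exact aux _ _ 0 0 0 1 _ (by norm_num) (by simp [L5vO])
    · exact aux _ _ 0 1 0 0 _ (by norm_num) (by simp [L5vO])
    · exact aux _ _ (-1) 0 0 0 _ (by norm_num) (by simp [L5vO, hi])
    · exact aux _ _ 0 0 0 1 _ (by norm_num) (by simp [L5vO])
    · exact aux _ _ 0 0 (-1) 0 _ (by norm_num) (by simp [L5vO, hi, ← mul_assoc])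
    · exact aux _ _ 0 0 1 0 _ (by norm_num) (by simp [L5vO])
    · exact aux _ _ 0 0 0 1 _ (by norm_num) (by simp [L5vO, mul_comm])
    · exact aux _ _ 1 0 1 0 _ (by norm_num) (by simp [L5vO, ht, add_comm])
    · exact aux _ _ 0 1 0 1 _ (by norm_num) (by
        simp [L5vO]; linear_combination L5iO * ht)
    · exact aux _ _ 0 0 0 1 _ (by norm_num) (by simp [L5vO])
    · exact aux _ _ 0 0 (-1) 0 _ (by norm_num) (by
        simp [L5vO]; linear_combination L5tO * hi)
    · exact aux _ _ 0 1 0 1 _ (by norm_num) (by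
        simp [L5vO]; linear_combination L5iO * ht)
    · exact aux _ _ (-1) 0 (-1) 0 _ (by norm_num) (by
        simp [L5vO]; linear_combination L5tO * L5tO * hi - ht)
  rw [Algebra.discr_def, hM]
  simp [Matrix.det_succ_row_zero, Fin.sum_univ_succ, Fin.succAbove]

theorem L5_discr_le : |discr L5| ≤ 400 := by
  have hc : Fintype.card (Module.Free.ChooseBasisIndex ℤ (𝓞 L5)) = Fintype.card (Fin 4) := by
    rw [← Module.finrank_eq_card_basis (RingOfIntegers.basis L5), RingOfIntegers.rank, L5_finrank]
    rfl
  let B := (RingOfIntegers.basis L5).reindex (Fintype.equivOfCardEq hc)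
  have h1 := Algebra.discr_of_matrix_vecMul (A := ℤ) B (B.toMatrix L5vO)
  rw [Module.Basis.toMatrix_map_vecMul, L5_discr_vO, discr_eq_discr] at h1
  set D := (B.toMatrix L5vO).det
  have hD : 1 ≤ D ^ 2 := by
    have : D ≠ 0 := by rintro h; rw [h] at h1; norm_num at h1
    have := sq_pos_of_ne_zero this
    omega
  have h2 : D ^ 2 * |discr L5| = 400 := by
    rw [← abs_of_nonneg (sq_nonneg D), ← abs_mul, ← h1]; rfl
  nlinarith [abs_nonneg (discr L5)]

theorem L5_mink : (4 / Real.pi) ^ InfinitePlace.nrComplexPlaces L5 *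
    ((Module.finrank ℚ L5).factorial / (Module.finrank ℚ L5) ^ (Module.finrank ℚ L5) *
      √|discr L5|) < 4 := by
  have hr : InfinitePlace.nrComplexPlaces L5 ≤ 2 := by
    have := InfinitePlace.card_add_two_mul_card_eq_rank L5
    rw [L5_finrank] at this
    omega
  rw [L5_finrank]
  have hpi := Real.pi_gt_three
  have h4 := Real.pi_le_four
  have hone : 1 ≤ 4 / Real.pi := by rw [le_div_iff₀ (by positivity)]; linarith
  have hs : √|((discr L5 : ℤ) : ℝ)| ≤ 20 := by
    rw [Real.sqrt_le_left (by norm_num)]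
    have := L5_discr_le
    norm_num
    exact_mod_cast this
  have hp : (4 / Real.pi) ^ InfinitePlace.nrComplexPlaces L5 ≤ (4 / 3) ^ 2 := by
    refine (pow_le_pow_right₀ hone hr).trans ?_
    gcongr
  have hf : ((Nat.factorial 4 : ℕ) : ℝ) / ((4 : ℕ) : ℝ) ^ 4 = 3 / 32 := by
    norm_num [Nat.factorial]
  rw [hf]
  calc _ ≤ ((4 : ℝ) / 3) ^ 2 * (3 / 32 * 20) := by gcongr
    _ < 4 := by norm_num

/-- The ring of integers of `L = ℚ(i, √5)` is a principal ideal domain: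
every ideal of `O_L` is principal. -/
theorem stmt8 : IsPrincipalIdealRing (𝓞 ↥L5) := by
  refine RingOfIntegers.isPrincipalIdealRing_of_isPrincipal_of_norm_le_of_isPrime ?_
  rintro ⟨I, hI0⟩ hI hle
  exfalso
  change I.IsPrime at hI
  have hlt : Ideal.absNorm I < 4 := by
    have := lt_of_le_of_lt hle L5_mink
    exact_mod_cast this
  have hne : I ≠ ⊥ := nonZeroDivisors.ne_zero hI0
  have h0 : Ideal.absNorm I ≠ 0 := by simpa [Ideal.absNorm_eq_zero_iff] using hne
  have h1 : Ideal.absNorm I ≠ 1 := by simpa [Ideal.absNorm_eq_one_iff] using hI.ne_top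
  have hmax : I.IsMaximal := hI.isMaximal hne
  let : Field (𝓞 L5 ⧸ I) := Ideal.Quotient.field I
  have hcard : Nat.card (𝓞 L5 ⧸ I) = Ideal.absNorm I := rfl
  have : Finite (𝓞 L5 ⧸ I) := Nat.finite_of_card_ne_zero (by rw [hcard]; exact h0)
  let _ := Fintype.ofFinite (𝓞 L5 ⧸ I)
  rw [Nat.card_eq_fintype_card] at hcard
  have hfer : ∀ t : 𝓞 L5 ⧸ I, t ^ Ideal.absNorm I = t := by
    intro t
    rw [← hcard]
    exact FiniteField.pow_card t
  have hzero : ((Ideal.absNorm I : ℕ) : 𝓞 L5 ⧸ I) = 0 := by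
    rw [← hcard]; exact Nat.cast_card_eq_zero _
  have hi := congrArg (Ideal.Quotient.mk I) L5iO_sq
  have ht := congrArg (Ideal.Quotient.mk I) L5tO_sq
  simp only [map_mul, map_add, map_neg, map_one] at hi ht
  have hcases : Ideal.absNorm I = 2 ∨ Ideal.absNorm I = 3 := by omega
  apply one_ne_zero (α := 𝓞 L5 ⧸ I)
  rcases hcases with h | h
  · rw [h] at hfer
    linear_combination hfer (Ideal.Quotient.mk I L5tO) - ht
  · rw [h] at hfer hzero
    have h3 := hfer (Ideal.Quotient.mk I L5iO)
    generalize Ideal.Quotient.mk I L5iO = j at *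
    push_cast at hzero
    have h4 : 2 * j = 0 := by linear_combination j * hi - h3
    linear_combination 4 * hi - 2 * j * h4 - hzero
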